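/- For every n ∈ ℤ there is a unique bounded linear operator T_n on L²((0,∞), t dt) such that for every f ∈ L²((0,∞), t dt) and almost every t > 0 one has T_n f(t) = ∫₀^∞ K_n^α(t,t') f(t') sin α · t' dt', the integral converging absolutely; moreover there is a constant C > 0, depending only on α, such that the operator norm satisfies ‖T_n‖ ≤ C/(|n|+1) for all n ∈ ℤ. -/

import Mathlib

open Real

/-- Parametrization of the infinite straight cone of opening angle `2α`. -/
noncomputable def coneParam (α t θ : ℝ) : EuclideanSpace ℝ (Fin 3) :=
  !₂[sin α * t * cos θ, sin α * t * sin θ, cos α * t]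

/-- Outward unit normal of the cone. -/
noncomputable def coneNormal (α θ : ℝ) : EuclideanSpace ℝ (Fin 3) :=
  !₂[cos α * cos θ, cos α * sin θ, -sin α]

/-- The layer-potential kernel of the infinite straight cone. -/
noncomputable def coneKernel (α t θ t' θ' : ℝ) : ℝ :=
  (inner ℝ (coneParam α t θ - coneParam α t' θ') (coneNormal α θ) : ℝ) /
    ‖coneParam α t' θ' - coneParam α t θ‖ ^ 3

/-- The `n`-th modal kernel `K_n^α(t,t') = (1/(2π)) ∫₀^{2π} e^{−inθ} K^{Γ_α}(t,θ,t',0) dθ`. -/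
noncomputable def modalKernel (α : ℝ) (n : ℤ) (t t' : ℝ) : ℂ :=
  ((1 / (2 * π) : ℝ) : ℂ) *
    ∫ θ in (0:ℝ)..(2 * π), Complex.exp (-Complex.I * (n : ℂ) * (θ : ℂ)) * (coneKernel α t θ t' 0 : ℂ)

open MeasureTheory

/-- The measure `t dt` on `(0, ∞)`. -/
noncomputable def muT : Measure ℝ :=
  (volume.restrict (Set.Ioi (0:ℝ))).withDensity fun t => ENNReal.ofReal t
open MeasureTheory

/-- distance -/
noncomputable def cR (α t t' θ : ℝ) : ℝ :=
  Real.sqrt ((t - t') ^ 2 + 2 * (t * t') * sin α ^ 2 * (1 - cos θ))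

lemma coneKernel_eq (α t t' θ : ℝ) :
    coneKernel α t θ t' 0 = sin α * cos α * t' * ((1 - cos θ) / cR α t t' θ ^ 3) := by
  have h1 : (inner ℝ (coneParam α t θ - coneParam α t' 0) (coneNormal α θ) : ℝ) =
      sin α * cos α * t' * (1 - cos θ) := by
    simp only [coneParam, coneNormal, PiLp.inner_apply, Fin.sum_univ_three]
    simp
    have := sin_sq_add_cos_sq θ
    linear_combination (cos α * sin α * t) * this
  have h2 : ‖coneParam α t' 0 - coneParam α t θ‖ = cR α t t' θ := by
    rw [EuclideanSpace.norm_eq, cR]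
    congr 1
    simp only [coneParam, Fin.sum_univ_three]
    simp [mul_pow]
    have := sin_sq_add_cos_sq θ
    have h3 := sin_sq_add_cos_sq α
    linear_combination (sin α^2 * t^2) * this + (t-t')^2 * h3
  rw [coneKernel, h1, h2, mul_div_assoc]

lemma modalKernel_eq (α : ℝ) (n : ℤ) (t t' : ℝ) (ht : 0 < t) (ht' : 0 < t') (hne : t ≠ t') :
    modalKernel α n t t' = ((1 / π * (sin α * cos α * t') *
      ∫ θ in (0:ℝ)..π, cos (n * θ) * ((1 - cos θ) / cR α t t' θ ^ 3) : ℝ) : ℂ) := by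
  set k : ℝ → ℝ := fun θ => (1 - cos θ) / cR α t t' θ ^ 3 with hk
  have hpos : ∀ θ, 0 < cR α t t' θ := by
    intro θ
    apply Real.sqrt_pos.2
    have : 0 < (t - t')^2 := by have := sub_ne_zero.2 hne; positivity
    have h2 : 0 ≤ 1 - cos θ := by linarith [cos_le_one θ]
    positivity
  have hcont : Continuous k := by
    have : Continuous (cR α t t') := by unfold cR; fun_prop
    apply Continuous.div (by fun_prop) (by fun_prop)
    intro θ; have := hpos θ; positivity
  have hsymm : ∀ θ, k (2 * π - θ) = k θ := by
    intro θ; simp [hk, cR, cos_two_pi_sub]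
  have hcc : Continuous (fun θ : ℝ => Complex.exp (-Complex.I * (n : ℂ) * (θ : ℂ)) * (k θ : ℂ)) := by
    fun_prop
  have hcc2 : Continuous (fun θ : ℝ => Complex.exp (Complex.I * (n : ℂ) * (θ : ℂ)) * (k θ : ℂ)) := by
    fun_prop
  have hA : ∫ θ in (0:ℝ)..(2*π), Complex.exp (-Complex.I * (n : ℂ) * (θ : ℂ)) * (k θ : ℂ)
      = ((2 * ∫ θ in (0:ℝ)..π, cos (n * θ) * k θ : ℝ) : ℂ) := by
    rw [← intervalIntegral.integral_add_adjacent_intervals (hcc.intervalIntegrable 0 π)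
      (hcc.intervalIntegrable π (2*π))]
    have h2 : ∫ θ in π..(2*π), Complex.exp (-Complex.I * (n : ℂ) * (θ : ℂ)) * (k θ : ℂ)
      = ∫ θ in (0:ℝ)..π, Complex.exp (Complex.I * (n : ℂ) * (θ : ℂ)) * (k θ : ℂ) := by
      have := intervalIntegral.integral_comp_sub_left (a := 0) (b := π)
        (fun θ : ℝ => Complex.exp (-Complex.I * (n : ℂ) * (θ : ℂ)) * (k θ : ℂ)) (2*π)
      rw [show 2 * π - π = π by ring, sub_zero] at this
      rw [← this]
      apply intervalIntegral.integral_congr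
      intro θ _
      simp only [hsymm]
      congr 1
      rw [show -Complex.I * (n:ℂ) * ((2 * π - θ : ℝ) : ℂ) =
        Complex.I * n * θ + ((-n : ℤ) : ℂ) * (2 * π * Complex.I) by push_cast; ring]
      rw [Complex.exp_add, Complex.exp_int_mul_two_pi_mul_I, mul_one]
    rw [h2, ← intervalIntegral.integral_add (hcc.intervalIntegrable _ _)
      (hcc2.intervalIntegrable _ _), Complex.ofReal_mul, ← intervalIntegral.integral_ofReal,
      ← intervalIntegral.integral_const_mul]
    apply intervalIntegral.integral_congr
    intro θ _
    simp only
    push_cast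
    rw [← mul_assoc, Complex.two_cos]
    rw [← add_mul, add_comm]
    congr 2
    · congr 1; ring
    · congr 1; ring
  unfold modalKernel
  have hB : ∀ θ : ℝ, Complex.exp (-Complex.I * (n : ℂ) * (θ : ℂ)) * (coneKernel α t θ t' 0 : ℂ)
     = ((sin α * cos α * t' : ℝ) : ℂ) *
      (Complex.exp (-Complex.I * (n : ℂ) * (θ : ℂ)) * (k θ : ℂ)) := by
    intro θ; rw [coneKernel_eq]; simp only [hk]; push_cast; ring
  simp_rw [hB]
  rw [intervalIntegral.integral_const_mul, hA]
  have : (π:ℂ) ≠ 0 := by exact_mod_cast pi_ne_zero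
  change _ = ((1 / π * (sin α * cos α * t') * ∫ θ in (0:ℝ)..π, cos (n * θ) * k θ : ℝ) : ℂ)
  push_cast
  field_simp

lemma cR_pos (α t t' θ : ℝ) (ht : 0 < t) (ht' : 0 < t') (hne : t ≠ t') : 0 < cR α t t' θ := by
  apply Real.sqrt_pos.2
  have : 0 < (t - t')^2 := by have := sub_ne_zero.2 hne; positivity
  have h2 : 0 ≤ 1 - cos θ := by linarith [cos_le_one θ]
  positivity

lemma cR_sq (α t t' θ : ℝ) (ht : 0 < t) (ht' : 0 < t') : cR α t t' θ ^ 2 =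
    (t - t') ^ 2 + 2 * (t * t') * sin α ^ 2 * (1 - cos θ) := by
  apply Real.sq_sqrt
  have h2 : 0 ≤ 1 - cos θ := by linarith [cos_le_one θ]
  positivity

lemma cR_hasDeriv (α t t' θ : ℝ) (ht : 0 < t) (ht' : 0 < t') (hne : t ≠ t') :
    HasDerivAt (cR α t t') (t * t' * sin α ^ 2 * sin θ / cR α t t' θ) θ := by
  have hp := cR_pos α t t' θ ht ht' hne
  have h1 : HasDerivAt (fun θ => (t - t') ^ 2 + 2 * (t * t') * sin α ^ 2 * (1 - cos θ))
      (2 * (t * t') * sin α ^ 2 * (- (- sin θ))) θ :=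
    (((hasDerivAt_cos θ).const_sub 1).const_mul (2 * (t * t') * sin α ^ 2)).const_add ((t-t')^2)
  have h2 := h1.sqrt (by have := cR_sq α t t' θ ht ht'; rw [← this]; positivity)
  refine HasDerivAt.congr_deriv (f := cR α t t') h2 ?_
  change _ / (2 * cR α t t' θ) = _
  field_simp

/-- first derivative -/
noncomputable def kd1 (α t t' θ : ℝ) : ℝ :=
  sin θ * (1 / cR α t t' θ ^ 3 - 3 * (t * t' * sin α ^ 2) * (1 - cos θ) / cR α t t' θ ^ 5)

/-- second derivative -/
noncomputable def kd2 (α t t' θ : ℝ) : ℝ :=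
  cos θ * (1 / cR α t t' θ ^ 3 - 3 * (t * t' * sin α ^ 2) * (1 - cos θ) / cR α t t' θ ^ 5)
  + sin θ ^ 2 * (- 6 * (t * t' * sin α ^ 2) / cR α t t' θ ^ 5
    + 15 * (t * t' * sin α ^ 2) ^ 2 * (1 - cos θ) / cR α t t' θ ^ 7)

lemma k_hasDeriv (α t t' θ : ℝ) (ht : 0 < t) (ht' : 0 < t') (hne : t ≠ t') :
    HasDerivAt (fun θ => (1 - cos θ) / cR α t t' θ ^ 3) (kd1 α t t' θ) θ := by
  have hp := cR_pos α t t' θ ht ht' hne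
  have hR := cR_hasDeriv α t t' θ ht ht' hne
  have h := ((hasDerivAt_cos θ).const_sub 1).fun_div (hR.fun_pow 3) (by positivity)
  refine h.congr_deriv ?_
  unfold kd1
  field_simp
  ring

lemma kd1_hasDeriv (α t t' θ : ℝ) (ht : 0 < t) (ht' : 0 < t') (hne : t ≠ t') :
    HasDerivAt (kd1 α t t') (kd2 α t t' θ) θ := by
  have hp := cR_pos α t t' θ ht ht' hne
  have hR := cR_hasDeriv α t t' θ ht ht' hne
  have h1 := (hasDerivAt_const θ (1:ℝ)).fun_div (hR.fun_pow 3) (by positivity)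
  have h2 := (((hasDerivAt_cos θ).const_sub 1).const_mul (3 * (t * t' * sin α ^ 2))).fun_div
    (hR.fun_pow 5) (by positivity)
  have h := (hasDerivAt_sin θ).fun_mul (h1.fun_sub h2)
  refine h.congr_deriv ?_
  unfold kd2
  field_simp
  ring

lemma kd2_bound (α t t' θ : ℝ) (ht : 0 < t) (ht' : 0 < t') (hne : t ≠ t') :
    |kd2 α t t' θ| ≤ 16 / cR α t t' θ ^ 3 := by
  have hp := cR_pos α t t' θ ht ht' hne
  have hsq := cR_sq α t t' θ ht ht'
  have hx : 0 ≤ 1 - cos θ := by linarith [cos_le_one θ]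
  set R := cR α t t' θ with hRdef
  set m := t * t' * sin α ^ 2 with hm
  have hm0 : 0 ≤ m := by positivity
  obtain ⟨y, hy⟩ : ∃ y, y = m * (1 - cos θ) / R ^ 2 := ⟨_, rfl⟩
  have hy0 : 0 ≤ y := by rw [hy]; positivity
  have hy1 : y ≤ 1 / 2 := by
    rw [hy, div_le_iff₀ (by positivity), hsq]
    nlinarith [sq_nonneg (t - t')]
  have hs : sin θ ^ 2 = (1 - cos θ) * (1 + cos θ) := by
    have := sin_sq_add_cos_sq θ; linear_combination this
  have e : kd2 α t t' θ = (cos θ * (1 - 3 * y) + (1 + cos θ) * (- 6 * y + 15 * y ^ 2)) / R ^ 3 := by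
    unfold kd2
    rw [hs, hy]
    simp only [← hRdef, ← hm]
    field_simp
  rw [e, abs_div, abs_of_pos (show 0 < R ^ 3 by positivity)]
  gcongr
  have hc1 := cos_le_one θ
  have hc2 := neg_one_le_cos θ
  rw [abs_le]
  constructor <;> nlinarith [mul_nonneg hy0 (sub_nonneg.2 hy1), mul_nonneg hy0 hx,
    mul_nonneg (mul_nonneg hy0 (sub_nonneg.2 hy1)) hx, mul_nonneg (mul_nonneg hy0 (sub_nonneg.2 hy1)) (by linarith : 0 ≤ 1 + cos θ)]

lemma ibp (α t t' : ℝ) (n : ℤ) (ht : 0 < t) (ht' : 0 < t') (hne : t ≠ t') :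
    (n : ℝ) ^ 2 * ∫ θ in (0:ℝ)..π, cos (n * θ) * ((1 - cos θ) / cR α t t' θ ^ 3)
      = ∫ θ in (0:ℝ)..π, (1 - cos (n * θ)) * kd2 α t t' θ := by
  have hRc : Continuous (cR α t t') := by unfold cR; fun_prop
  have hR0 : ∀ θ, cR α t t' θ ≠ 0 := fun θ => (cR_pos α t t' θ ht ht' hne).ne'
  have c0 : Continuous (fun θ => (1 - cos θ) / cR α t t' θ ^ 3) := by
    fun_prop (disch := intro θ; exact pow_ne_zero _ (hR0 θ))
  have c2 : Continuous (kd2 α t t') := by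
    unfold kd2
    fun_prop (disch := intro θ; exact pow_ne_zero _ (hR0 θ))
  have hd : ∀ θ, HasDerivAt (fun θ => cos (n * θ) * kd1 α t t' θ +
      n * (sin (n * θ) * ((1 - cos θ) / cR α t t' θ ^ 3)) - kd1 α t t' θ)
      ((n:ℝ) ^ 2 * (cos (n * θ) * ((1 - cos θ) / cR α t t' θ ^ 3)) -
        (1 - cos (n * θ)) * kd2 α t t' θ) θ := by
    intro θ
    have hl : HasDerivAt (fun θ : ℝ => (n:ℝ) * θ) n θ := by
      simpa using (hasDerivAt_id θ).const_mul (n:ℝ)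
    have h1 := kd1_hasDeriv α t t' θ ht ht' hne
    have h0 := k_hasDeriv α t t' θ ht ht' hne
    have h := ((hl.cos.fun_mul h1).fun_add ((hl.sin.fun_mul h0).const_mul (n:ℝ))).fun_sub h1
    refine h.congr_deriv ?_
    ring
  have hF := intervalIntegral.integral_eq_sub_of_hasDerivAt (a := 0) (b := π) (fun θ _ => hd θ)
    (Continuous.intervalIntegrable (by fun_prop) _ _)
  rw [intervalIntegral.integral_sub (Continuous.intervalIntegrable (by fun_prop) _ _)
    (Continuous.intervalIntegrable (by fun_prop) _ _), intervalIntegral.integral_const_mul] at hF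
  have z : kd1 α t t' π = 0 := by simp [kd1]
  have z0 : kd1 α t t' 0 = 0 := by simp [kd1]
  rw [z, z0, sin_int_mul_pi] at hF
  simp at hF
  linarith

lemma cR_lower (α t t' θ : ℝ) (ht : 0 < t) (ht' : 0 < t') (l : ℝ) (hl : 0 < l)
    (hl2 : l ^ 2 ≤ 4 / π ^ 2 * sin α ^ 2 * (t * t')) (h0 : 0 ≤ θ) (h1 : θ ≤ π) :
    (|t - t'| + l * θ) / 2 ≤ cR α t t' θ := by
  have hc := cos_le_one_sub_mul_cos_sq (x := θ) (by rw [abs_of_nonneg h0]; exact h1)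
  apply Real.le_sqrt_of_sq_le
  have h3 : (l * θ) ^ 2 ≤ 2 * (t * t') * sin α ^ 2 * (1 - cos θ) := by
    calc (l * θ) ^ 2 = l ^ 2 * θ ^ 2 := by ring
      _ ≤ 4 / π ^ 2 * sin α ^ 2 * (t * t') * θ ^ 2 := by gcongr
      _ = 2 * (t * t') * sin α ^ 2 * (2 / π ^ 2 * θ ^ 2) := by ring
      _ ≤ _ := by gcongr; linarith
  have := sq_abs (t - t')
  nlinarith [sq_nonneg (|t - t'| - l * θ)]

lemma lemI (d l : ℝ) (hd : 0 < d) (hl : 0 < l) :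
    ∫ θ in (0:ℝ)..π, 1 / (d + l * θ) ^ 3 ≤ 1 / (2 * l * d ^ 2) := by
  have hpos : ∀ θ ∈ Set.uIcc 0 π, 0 < d + l * θ := by
    intro θ hθ; rw [Set.uIcc_of_le pi_pos.le] at hθ; have := hθ.1; positivity
  have hd1 : ∀ θ ∈ Set.uIcc 0 π, HasDerivAt (fun θ => - (1 / (2 * l)) * (1 / (d + l * θ) ^ 2))
      (1 / (d + l * θ) ^ 3) θ := by
    intro θ hθ
    have hp := hpos θ hθ
    have h1 : HasDerivAt (fun θ : ℝ => d + l * θ) l θ := by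
      simpa using ((hasDerivAt_id θ).const_mul l).const_add d
    have h := (((hasDerivAt_const θ (1:ℝ)).fun_div (h1.fun_pow 2) (by positivity))).const_mul
      (- (1 / (2 * l)))
    refine h.congr_deriv ?_
    field_simp
    ring
  rw [intervalIntegral.integral_eq_sub_of_hasDerivAt hd1]
  · have : 0 < d + l * π := by positivity
    have h2 : 0 ≤ 1 / (2 * l) * (1 / (d + l * π) ^ 2) := by positivity
    have h3 : 1 / (2 * l * d ^ 2) = 1 / (2 * l) * (1 / d ^ 2) := by field_simp
    rw [h3]; simp only [mul_zero, add_zero]; linarith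
  · apply ContinuousOn.intervalIntegrable
    apply ContinuousOn.div (by fun_prop) (by fun_prop)
    intro θ hθ; have := hpos θ hθ; positivity

lemma lemJ (d l : ℝ) (hd : 0 < d) (hl : 0 < l) :
    ∫ θ in (0:ℝ)..π, θ * √θ / (d + l * θ) ^ 3 ≤ 2 / (l ^ 2 * √l * √d) := by
  have hpos : ∀ θ ∈ Set.uIcc 0 π, 0 < d + l * θ := by
    intro θ hθ; rw [Set.uIcc_of_le pi_pos.le] at hθ; have := hθ.1; positivity
  have hsl : 0 < √l := Real.sqrt_pos.2 hl
  have hd1 : ∀ θ ∈ Set.uIcc 0 π, HasDerivAt (fun θ => - (2 / (l ^ 2 * √l)) * (1 / √(d + l * θ)))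
      (1 / (l * √l) * (1 / ((d + l * θ) * √(d + l * θ)))) θ := by
    intro θ hθ
    have hp := hpos θ hθ
    have h1 : HasDerivAt (fun θ : ℝ => d + l * θ) l θ := by
      simpa using ((hasDerivAt_id θ).const_mul l).const_add d
    have hs : 0 < √(d + l * θ) := Real.sqrt_pos.2 hp
    have h := (((hasDerivAt_const θ (1:ℝ)).fun_div (h1.sqrt hp.ne') (by positivity))).const_mul
      (- (2 / (l ^ 2 * √l)))
    refine h.congr_deriv ?_
    have e : √(d + l * θ) ^ 2 = d + l * θ := Real.sq_sqrt hp.le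
    rw [e]
    field_simp
    ring
  have hci : IntervalIntegrable
      (fun θ => 1 / (l * √l) * (1 / ((d + l * θ) * √(d + l * θ)))) volume 0 π := by
    apply ContinuousOn.intervalIntegrable
    apply ContinuousOn.mul (by fun_prop)
    apply ContinuousOn.div (by fun_prop) (by fun_prop)
    intro θ hθ; have := hpos θ hθ; positivity
  have hle : ∫ θ in (0:ℝ)..π, θ * √θ / (d + l * θ) ^ 3 ≤
      ∫ θ in (0:ℝ)..π, 1 / (l * √l) * (1 / ((d + l * θ) * √(d + l * θ))) := by
    apply intervalIntegral.integral_mono_on pi_pos.le _ hci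
    · intro θ hθ
      have h0 := hθ.1
      have hp : 0 < d + l * θ := by positivity
      have hs : 0 < √(d + l * θ) := Real.sqrt_pos.2 hp
      have h1 : l * θ ≤ d + l * θ := by linarith
      have h2 : √l * √θ ≤ √(d + l * θ) := by
        rw [← Real.sqrt_mul hl.le]; exact Real.sqrt_le_sqrt h1
      have h3 : (l * θ) * (√l * √θ) ≤ (d + l * θ) * √(d + l * θ) := by gcongr
      have e : √(d + l * θ) * √(d + l * θ) = d + l * θ := Real.mul_self_sqrt hp.le
      have e2 : 1 / (l * √l) * (1 / ((d + l * θ) * √(d + l * θ))) =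
          ((d + l * θ) * √(d + l * θ)) / (l * √l) / (d + l * θ) ^ 3 := by
        rw [pow_succ, sq]
        nth_rewrite 6 [← e]
        field_simp
      rw [e2]
      gcongr
      rw [le_div_iff₀ (by positivity)]
      linarith
    · apply ContinuousOn.intervalIntegrable
      apply ContinuousOn.div (by fun_prop) (by fun_prop)
      intro θ hθ; have := hpos θ hθ; positivity
  refine hle.trans ?_
  rw [intervalIntegral.integral_eq_sub_of_hasDerivAt hd1 hci]
  have : 0 < d + l * π := by positivity
  have h2 : 0 ≤ 2 / (l ^ 2 * √l) * (1 / √(d + l * π)) := by positivity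
  have h3 : 2 / (l ^ 2 * √l * √d) = 2 / (l ^ 2 * √l) * (1 / √d) := by
    rw [div_mul_div_comm, mul_one]
  rw [h3]; simp only [mul_zero, add_zero]; linarith

lemma one_sub_cos_le (u : ℝ) (hu : 0 ≤ u) : 1 - cos u ≤ 2 * (u * √u) := by
  by_cases h : u ≤ 1
  · have h1 := one_sub_sq_div_two_le_cos (x := u)
    have h2 : u ≤ √u := by
      apply Real.le_sqrt_of_sq_le; nlinarith
    nlinarith [mul_nonneg hu (sub_nonneg.2 h2), Real.sqrt_nonneg u]
  · push Not at h
    have : 1 ≤ √u := by rw [Real.one_le_sqrt]; exact h.le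
    nlinarith [neg_one_le_cos u]

/-- the angular integral -/
noncomputable def II (α t t' : ℝ) (n : ℤ) : ℝ :=
  ∫ θ in (0:ℝ)..π, cos (n * θ) * ((1 - cos θ) / cR α t t' θ ^ 3)

lemma cR_ge (α t t' θ : ℝ) (ht : 0 < t) (ht' : 0 < t') : |t - t'| ≤ cR α t t' θ := by
  apply Real.le_sqrt_of_sq_le
  rw [sq_abs]
  have h2 : 0 ≤ 1 - cos θ := by linarith [cos_le_one θ]
  have : 0 ≤ 2 * (t * t') * sin α ^ 2 * (1 - cos θ) := by positivity
  linarith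

lemma int_bound {f g : ℝ → ℝ} (hg : ContinuousOn g (Set.Icc 0 π))
    (h : ∀ θ, 0 ≤ θ → θ ≤ π → |f θ| ≤ g θ) :
    |∫ θ in (0:ℝ)..π, f θ| ≤ ∫ θ in (0:ℝ)..π, g θ := by
  rw [← Real.norm_eq_abs]
  apply intervalIntegral.norm_integral_le_of_norm_le pi_pos.le
  · exact Filter.Eventually.of_forall (fun θ hθ => h θ hθ.1.le hθ.2)
  · apply ContinuousOn.intervalIntegrable; rwa [Set.uIcc_of_le pi_pos.le]

lemma cube_bound (α t t' l θ : ℝ) (ht : 0 < t) (ht' : 0 < t') (hne : t ≠ t') (hl : 0 < l)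
    (hl2 : l ^ 2 ≤ 4 / π ^ 2 * sin α ^ 2 * (t * t')) (h0 : 0 ≤ θ) (h1 : θ ≤ π) :
    1 / cR α t t' θ ^ 3 ≤ 8 * (1 / (|t - t'| + l * θ) ^ 3) := by
  have hd : 0 < |t - t'| := abs_pos.2 (sub_ne_zero.2 hne)
  have h := cR_lower α t t' θ ht ht' l hl hl2 h0 h1
  have : 8 * (1 / (|t - t'| + l * θ) ^ 3) = 1 / ((|t - t'| + l * θ) / 2) ^ 3 := by
    field_simp; norm_num
  rw [this]
  gcongr

lemma denom_cont (d l : ℝ) (hd : 0 < d) (hl : 0 < l) :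
    ContinuousOn (fun θ => 1 / (d + l * θ) ^ 3) (Set.Icc 0 π) := by
  apply ContinuousOn.div (by fun_prop) (by fun_prop)
  intro θ hθ; have := hθ.1; positivity

lemma II_far (α t t' : ℝ) (n : ℤ) (ht : 0 < t) (ht' : 0 < t') (hne : t ≠ t') :
    (n:ℝ) ^ 2 * |II α t t' n| ≤ 32 * π / |t - t'| ^ 3 := by
  have hd : 0 < |t - t'| := abs_pos.2 (sub_ne_zero.2 hne)
  have e : (n:ℝ) ^ 2 * |II α t t' n| = |(n:ℝ) ^ 2 * II α t t' n| := by
    rw [abs_mul, abs_of_nonneg (sq_nonneg (n:ℝ))]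
  rw [e, II, ibp α t t' n ht ht' hne]
  have := int_bound (f := fun θ => (1 - cos (n * θ)) * kd2 α t t' θ)
    (g := fun θ => 32 / |t - t'| ^ 3) (by fun_prop) ?_
  · refine this.trans (le_of_eq ?_)
    simp; ring
  · intro θ h0 h1
    rw [abs_mul]
    have h3 : |1 - cos (n * θ)| ≤ 2 := by
      rw [abs_le]; constructor <;> linarith [neg_one_le_cos (n * θ), cos_le_one (n * θ)]
    calc _ ≤ 2 * (16 / cR α t t' θ ^ 3) := by
            gcongr; exact kd2_bound α t t' θ ht ht' hne
      _ = 32 / cR α t t' θ ^ 3 := by ring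
      _ ≤ _ := by gcongr; exact cR_ge α t t' θ ht ht'

lemma II_mid (α t t' l : ℝ) (n : ℤ) (ht : 0 < t) (ht' : 0 < t') (hne : t ≠ t') (hl : 0 < l)
    (hl2 : l ^ 2 ≤ 4 / π ^ 2 * sin α ^ 2 * (t * t')) :
    (n:ℝ) ^ 2 * |II α t t' n| ≤ 128 / (l * |t - t'| ^ 2) := by
  have hd : 0 < |t - t'| := abs_pos.2 (sub_ne_zero.2 hne)
  have e : (n:ℝ) ^ 2 * |II α t t' n| = |(n:ℝ) ^ 2 * II α t t' n| := by
    rw [abs_mul, abs_of_nonneg (sq_nonneg (n:ℝ))]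
  rw [e, II, ibp α t t' n ht ht' hne]
  have := int_bound (f := fun θ => (1 - cos (n * θ)) * kd2 α t t' θ)
    (g := fun θ => 256 * (1 / (|t - t'| + l * θ) ^ 3))
    ((denom_cont _ l hd hl).const_smul (256:ℝ)) ?_
  · refine this.trans ?_
    rw [intervalIntegral.integral_const_mul]
    calc _ ≤ 256 * (1 / (2 * l * |t - t'| ^ 2)) := by gcongr; exact lemI _ l hd hl
      _ = _ := by field_simp; norm_num
  · intro θ h0 h1
    rw [abs_mul]
    have h3 : |1 - cos (n * θ)| ≤ 2 := by
      rw [abs_le]; constructor <;> linarith [neg_one_le_cos (n * θ), cos_le_one (n * θ)]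
    calc _ ≤ 2 * (16 / cR α t t' θ ^ 3) := by
            gcongr; exact kd2_bound α t t' θ ht ht' hne
      _ = 32 * (1 / cR α t t' θ ^ 3) := by ring
      _ ≤ 32 * (8 * (1 / (|t - t'| + l * θ) ^ 3)) := by
        gcongr; exact cube_bound α t t' l θ ht ht' hne hl hl2 h0 h1
      _ = _ := by ring

lemma Jcont (d l : ℝ) (hd : 0 < d) (hl : 0 < l) :
    ContinuousOn (fun θ => θ * √θ / (d + l * θ) ^ 3) (Set.Icc 0 π) := by
  apply ContinuousOn.div (by fun_prop) (by fun_prop)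
  intro θ hθ; have := hθ.1; positivity

lemma II_near (α t t' l N : ℝ) (n : ℤ) (ht : 0 < t) (ht' : 0 < t') (hne : t ≠ t') (hl : 0 < l)
    (hl2 : l ^ 2 ≤ 4 / π ^ 2 * sin α ^ 2 * (t * t')) (hN : N = |(n:ℝ)|) :
    N ^ 2 * |II α t t' n| ≤ 512 * (N * √N) / (l ^ 2 * √l * √|t - t'|) := by
  have hd : 0 < |t - t'| := abs_pos.2 (sub_ne_zero.2 hne)
  have hN0 : 0 ≤ N := by rw [hN]; positivity
  have e : N ^ 2 * |II α t t' n| = |(n:ℝ) ^ 2 * II α t t' n| := by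
    rw [abs_mul, abs_of_nonneg (sq_nonneg (n:ℝ)), hN, sq_abs]
  rw [e, II, ibp α t t' n ht ht' hne]
  have := int_bound (f := fun θ => (1 - cos (n * θ)) * kd2 α t t' θ)
    (g := fun θ => 256 * (N * √N) * (θ * √θ / (|t - t'| + l * θ) ^ 3))
    ((Jcont _ l hd hl).const_smul (256 * (N * √N))) ?_
  · refine this.trans ?_
    rw [intervalIntegral.integral_const_mul]
    calc _ ≤ 256 * (N * √N) * (2 / (l ^ 2 * √l * √|t - t'|)) := by
            gcongr; exact lemJ _ l hd hl
      _ = _ := by ring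
  · intro θ h0 h1
    rw [abs_mul]
    have h3 : |1 - cos (n * θ)| ≤ 2 * (N * √N) * (θ * √θ) := by
      rw [abs_of_nonneg (by linarith [cos_le_one (n * θ)])]
      have e2 : cos (n * θ) = cos (N * θ) := by
        rw [hN, ← cos_abs (n * θ), abs_mul, abs_of_nonneg h0]
      rw [e2]
      refine (one_sub_cos_le (N * θ) (by positivity)).trans (le_of_eq ?_)
      rw [Real.sqrt_mul hN0]; ring
    calc _ ≤ 2 * (N * √N) * (θ * √θ) * (16 / cR α t t' θ ^ 3) := by
            gcongr; exact kd2_bound α t t' θ ht ht' hne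
      _ = 32 * (N * √N) * (θ * √θ) * (1 / cR α t t' θ ^ 3) := by ring
      _ ≤ 32 * (N * √N) * (θ * √θ) * (8 * (1 / (|t - t'| + l * θ) ^ 3)) := by
        gcongr; exact cube_bound α t t' l θ ht ht' hne hl hl2 h0 h1
      _ = _ := by ring

lemma II_near0 (α t t' l : ℝ) (ht : 0 < t) (ht' : 0 < t') (hne : t ≠ t') (hl : 0 < l)
    (hl2 : l ^ 2 ≤ 4 / π ^ 2 * sin α ^ 2 * (t * t')) :
    |II α t t' 0| ≤ 512 / (l ^ 2 * √l * √|t - t'|) := by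
  have hd : 0 < |t - t'| := abs_pos.2 (sub_ne_zero.2 hne)
  rw [II]
  have := int_bound (f := fun θ => cos ((0:ℤ) * θ) * ((1 - cos θ) / cR α t t' θ ^ 3))
    (g := fun θ => 16 * (θ * √θ / (|t - t'| + l * θ) ^ 3))
    ((Jcont _ l hd hl).const_smul (16:ℝ)) ?_
  · refine this.trans ?_
    rw [intervalIntegral.integral_const_mul]
    calc _ ≤ 16 * (2 / (l ^ 2 * √l * √|t - t'|)) := by
            gcongr; exact lemJ _ l hd hl
      _ = 32 / (l ^ 2 * √l * √|t - t'|) := by ring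
      _ ≤ _ := by gcongr; norm_num
  · intro θ h0 h1
    have hp := cR_pos α t t' θ ht ht' hne
    have hx : 0 ≤ 1 - cos θ := by linarith [cos_le_one θ]
    simp only [Int.cast_zero, zero_mul, cos_zero, one_mul]
    rw [abs_of_nonneg (by positivity)]
    calc _ = (1 - cos θ) * (1 / cR α t t' θ ^ 3) := by ring
      _ ≤ 2 * (θ * √θ) * (8 * (1 / (|t - t'| + l * θ) ^ 3)) := by
        gcongr
        · exact one_sub_cos_le θ h0
        · exact cube_bound α t t' l θ ht ht' hne hl hl2 h0 h1
      _ = _ := by ring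

lemma II_far0 (α t t' : ℝ) (ht : 0 < t) (ht' : 0 < t') (hne : t ≠ t') :
    |II α t t' 0| ≤ 2 * π / |t - t'| ^ 3 := by
  have hd : 0 < |t - t'| := abs_pos.2 (sub_ne_zero.2 hne)
  rw [II]
  have := int_bound (f := fun θ => cos ((0:ℤ) * θ) * ((1 - cos θ) / cR α t t' θ ^ 3))
    (g := fun θ => 2 / |t - t'| ^ 3) (by fun_prop) ?_
  · refine this.trans (le_of_eq ?_)
    simp; ring
  · intro θ h0 h1
    have hp := cR_pos α t t' θ ht ht' hne
    have hx : 0 ≤ 1 - cos θ := by linarith [cos_le_one θ]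
    simp only [Int.cast_zero, zero_mul, cos_zero, one_mul]
    rw [abs_of_nonneg (by positivity)]
    gcongr
    · linarith [neg_one_le_cos θ]
    · exact cR_ge α t t' θ ht ht'

/-- profile -/
noncomputable def gg (u : ℝ) : ℝ := if |u| < 1 / 2 then 1 / √|u| else 1 / |u| ^ 2

lemma modal_norm (α : ℝ) (n : ℤ) (t t' : ℝ) (ht : 0 < t) (ht' : 0 < t') (hne : t ≠ t') :
    ‖modalKernel α n t t'‖ ≤ t' * |II α t t' n| := by
  rw [modalKernel_eq α n t t' ht ht' hne, Complex.norm_real, Real.norm_eq_abs, ← II, abs_mul]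
  gcongr
  rw [abs_mul, abs_mul, abs_mul, abs_of_pos ht', abs_of_pos (by positivity : 0 < 1 / π)]
  have h1 : |sin α| * |cos α| ≤ 1 := by
    have := abs_sin_le_one α; have := abs_cos_le_one α
    have := abs_nonneg (sin α); have := abs_nonneg (cos α); nlinarith
  have h2 : 1 / π ≤ 1 := by rw [div_le_one pi_pos]; linarith [pi_gt_three]
  have h3 : 1 / π * (|sin α| * |cos α|) ≤ 1 * 1 := by gcongr
  nlinarith

lemma modal_far (α : ℝ) (ha : 0 < sin α) (n : ℤ) (t t' τ N : ℝ) (ht : 0 < t) (ht' : 0 < t')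
    (hne : t ≠ t') (hτ : τ = t ∨ τ = t') (hN : N = max |(n:ℝ)| 1) (hd : τ / 2 ≤ N * |t - t'|) :
    ‖modalKernel α n t t'‖ ≤ (128 * π / sin α + 64 * π) / (N * |t - t'|) ^ 2 := by
  refine (modal_norm α n t t' ht ht' hne).trans ?_
  have hd0 : 0 < |t - t'| := abs_pos.2 (sub_ne_zero.2 hne)
  have hN1 : 1 ≤ N := by rw [hN]; exact le_max_right _ _
  rw [mul_pow, le_div_iff₀ (by positivity)]
  have key : N ^ 2 * |II α t t' n| * t' * |t - t'| ^ 2 ≤ 128 * π / sin α + 64 * π := by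
    have p1 : 0 ≤ 128 * π / sin α := by positivity
    have p2 : 0 ≤ 64 * π := by positivity
    by_cases hn : n = 0
    · subst hn
      have : N = 1 := by rw [hN]; simp
      subst this
      have h3 : t' ≤ 3 * |t - t'| := by
        have := neg_abs_le (t - t'); have := le_abs_self (t - t')
        rcases hτ with h | h <;> subst h <;> linarith
      have h := II_far0 α t t' ht ht' hne
      calc _ ≤ 1 ^ 2 * (2 * π / |t - t'| ^ 3) * (3 * |t - t'|) * |t - t'| ^ 2 := by gcongr
        _ = 6 * π := by field_simp; norm_num
        _ ≤ _ := by linarith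
    · have h1 : (1:ℝ) ≤ |(n:ℝ)| := by exact_mod_cast Int.one_le_abs hn
      have hNn : N ^ 2 = (n:ℝ) ^ 2 := by rw [hN, max_eq_left h1, sq_abs]
      rw [hNn]
      by_cases hc : t' / 2 ≤ t
      · have h := II_mid α t t' (sin α * t' / π) n ht ht' hne (by positivity) (by
          rw [div_pow, mul_pow, mul_assoc, div_mul_eq_mul_div, div_le_div_iff_of_pos_right (by positivity)]
          nlinarith [mul_pos (sq_pos_of_pos ha) ht'])
        calc _ ≤ 128 / (sin α * t' / π * |t - t'| ^ 2) * t' * |t - t'| ^ 2 := by gcongr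
          _ = 128 * π / sin α := by field_simp
          _ ≤ _ := by linarith
      · push Not at hc
        have h3 : t' ≤ 2 * |t - t'| := by
          have := neg_abs_le (t - t'); linarith
        have h := II_far α t t' n ht ht' hne
        calc _ ≤ (32 * π / |t - t'| ^ 3) * (2 * |t - t'|) * |t - t'| ^ 2 := by gcongr
          _ = 64 * π := by field_simp; norm_num
          _ ≤ _ := by linarith
  linarith

lemma modal_near (α : ℝ) (ha : 0 < sin α) (n : ℤ) (t t' τ N : ℝ) (ht : 0 < t) (ht' : 0 < t')
    (hne : t ≠ t') (hτ : τ = t ∨ τ = t') (hN : N = max |(n:ℝ)| 1) (hd : N * |t - t'| < τ / 2) :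
    ‖modalKernel α n t t'‖ ≤ 1024 / ((sin α / π) ^ 2 * √(sin α / π)) / (τ * √(N * |t - t'| * τ)) := by
  refine (modal_norm α n t t' ht ht' hne).trans ?_
  have hd0 : 0 < |t - t'| := abs_pos.2 (sub_ne_zero.2 hne)
  have hN1 : 1 ≤ N := by rw [hN]; exact le_max_right _ _
  have hτ0 : 0 < τ := by rcases hτ with h | h <;> subst h <;> assumption
  have hd2 : |t - t'| < τ / 2 := by nlinarith
  have := neg_abs_le (t - t')
  have := le_abs_self (t - t')
  have h2 : t' ≤ 2 * τ := by rcases hτ with h | h <;> subst h <;> linarith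
  have h3 : τ ^ 2 ≤ 4 * (t * t') := by rcases hτ with h | h <;> subst h <;> nlinarith
  set b := sin α / π with hb
  have hb0 : 0 < b := by positivity
  have hl2 : (b * τ) ^ 2 ≤ 4 / π ^ 2 * sin α ^ 2 * (t * t') := by
    calc (b * τ) ^ 2 = b ^ 2 * τ ^ 2 := by ring
      _ ≤ b ^ 2 * (4 * (t * t')) := by gcongr
      _ = _ := by rw [hb]; ring
  have key : N ^ 2 * |II α t t' n| ≤ 512 * (N * √N) / ((b * τ) ^ 2 * √(b * τ) * √|t - t'|) := by
    by_cases hn : n = 0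
    · subst hn
      have : N = 1 := by rw [hN]; simp
      subst this
      simpa using II_near0 α t t' (b * τ) ht ht' hne (by positivity) hl2
    · have h1 : (1:ℝ) ≤ |(n:ℝ)| := by exact_mod_cast Int.one_le_abs hn
      rw [max_eq_left h1] at hN
      exact II_near α t t' (b * τ) N n ht ht' hne (by positivity) hl2 hN
  have e1 : √(b * τ) = √b * √τ := Real.sqrt_mul hb0.le τ
  have e2 : √(N * |t - t'| * τ) = √N * √|t - t'| * √τ := by
    rw [Real.sqrt_mul (by positivity), Real.sqrt_mul (by positivity)]
  have s1 : 0 < √b := Real.sqrt_pos.2 hb0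
  have s2 : 0 < √τ := Real.sqrt_pos.2 hτ0
  have s3 : 0 < √N := Real.sqrt_pos.2 (by linarith)
  have s4 : 0 < √|t - t'| := Real.sqrt_pos.2 hd0
  have q3 : √N * √N = N := Real.mul_self_sqrt (by linarith)
  have hI : |II α t t' n| ≤ 512 * (N * √N) / ((b * τ) ^ 2 * √(b * τ) * √|t - t'|) / N ^ 2 := by
    rw [le_div_iff₀ (by positivity)]; linarith
  calc t' * |II α t t' n| ≤ (2 * τ) * (512 * (N * √N) / ((b * τ) ^ 2 * √(b * τ) * √|t - t'|) / N ^ 2) := by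
        gcongr
    _ = 1024 * (√N * √N) / (b ^ 2 * √b * τ * √τ * √|t - t'| * N * √N) := by
        rw [e1, q3]; field_simp; rw [Real.sq_sqrt (by linarith)]; ring
    _ = _ := by rw [e2, q3]; field_simp

lemma modal_bound (α : ℝ) (ha : 0 < sin α) : ∃ C : ℝ, 0 < C ∧ ∀ (n : ℤ) (t t' τ : ℝ),
    0 < t → 0 < t' → t ≠ t' → (τ = t ∨ τ = t') →
    ‖modalKernel α n t t'‖ ≤ C / τ ^ 2 * gg (max |(n:ℝ)| 1 / τ * (t - t')) := by
  refine ⟨128 * π / sin α + 64 * π + 1024 / ((sin α / π) ^ 2 * √(sin α / π)), by positivity, ?_⟩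
  intro n t t' τ ht ht' hne hτ
  set N := max |(n:ℝ)| 1 with hN
  have hd0 : 0 < |t - t'| := abs_pos.2 (sub_ne_zero.2 hne)
  have hN1 : 1 ≤ N := by rw [hN]; exact le_max_right _ _
  have hτ0 : 0 < τ := by rcases hτ with h | h <;> subst h <;> assumption
  have p1 : 0 ≤ 128 * π / sin α + 64 * π := by positivity
  have p2 : 0 ≤ 1024 / ((sin α / π) ^ 2 * √(sin α / π)) := by positivity
  have e : |N / τ * (t - t')| = N * |t - t'| / τ := by
    rw [abs_mul, abs_of_nonneg (by positivity)]; ring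
  unfold gg
  rw [e]
  split_ifs with h
  · rw [div_lt_iff₀ hτ0] at h
    refine (modal_near α ha n t t' τ N ht ht' hne hτ hN (by linarith)).trans ?_
    have e2 : √(N * |t - t'| * τ) = τ * √(N * |t - t'| / τ) := by
      rw [show N * |t - t'| * τ = τ ^ 2 * (N * |t - t'| / τ) by field_simp,
        Real.sqrt_mul (by positivity), Real.sqrt_sq hτ0.le]
    rw [e2, div_mul_div_comm, mul_one]
    rw [show τ * (τ * √(N * |t - t'| / τ)) = τ ^ 2 * √(N * |t - t'| / τ) by ring]
    gcongr
    linarith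
  · rw [not_lt, le_div_iff₀ hτ0] at h
    refine (modal_far α ha n t t' τ N ht ht' hne hτ hN (by linarith)).trans ?_
    rw [div_mul_div_comm, mul_one, ← mul_pow, mul_div_cancel₀ _ hτ0.ne']
    exact div_le_div_of_nonneg_right (le_add_of_nonneg_right p2) (by positivity)

lemma gg_nonneg (u : ℝ) : 0 ≤ gg u := by unfold gg; split_ifs <;> positivity

lemma gg_integrable : Integrable gg := by
  have hIoi : IntegrableOn gg (Set.Ioi 0) := by
    rw [← Set.Ioc_union_Ioi_eq_Ioi (show (0:ℝ) ≤ 1/2 by norm_num)]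
    apply IntegrableOn.union
    · rw [integrableOn_Ioc_iff_integrableOn_Ioo]
      have h := (intervalIntegral.intervalIntegrable_rpow' (a := 0) (b := 1/2) (r := -1/2) (by norm_num))
      rw [intervalIntegrable_iff_integrableOn_Ioo_of_le (by norm_num)] at h
      refine h.congr_fun ?_ measurableSet_Ioo
      intro u hu
      simp only [gg]
      rw [abs_of_pos hu.1, if_pos hu.2, show (-1/2:ℝ) = -(1/2) by norm_num, Real.rpow_neg hu.1.le,
        Real.sqrt_eq_rpow, one_div (u ^ (1/2:ℝ))]
    · have h := integrableOn_Ioi_rpow_of_lt (a := -2) (c := 1/2) (by norm_num) (by norm_num)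
      refine h.congr_fun ?_ measurableSet_Ioi
      intro u hu
      have hu : 1/2 < u := hu
      have hu0 : 0 < u := by linarith
      simp only [gg]
      rw [abs_of_pos hu0, if_neg (not_lt.2 hu.le), Real.rpow_neg hu0.le, one_div]
      norm_num
  have heven : ∀ u, gg (-u) = gg u := by intro u; simp [gg]
  have hIio : IntegrableOn gg (Set.Iic 0) := by
    rw [integrableOn_Iic_iff_integrableOn_Iio]
    have := hIoi.comp_neg
    simp only [Set.neg_Ioi, neg_zero] at this
    refine this.congr_fun ?_ measurableSet_Iio
    intro u _
    exact heven u
  rw [← integrableOn_univ, ← Set.Iic_union_Ioi (a := (0:ℝ))]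
  exact hIio.union hIoi

lemma gg_lint (N τ : ℝ) (hN : 0 < N) (hτ : 0 < τ) :
    ∫⁻ x, ENNReal.ofReal (gg (N / τ * x)) = ENNReal.ofReal (τ / N * ∫ u, gg u) := by
  have hi : Integrable (fun x => gg (N / τ * x)) := gg_integrable.comp_mul_left' (by positivity)
  rw [← ofReal_integral_eq_lintegral_ofReal hi (Filter.Eventually.of_forall (fun x => gg_nonneg _)),
    Measure.integral_comp_mul_left]
  rw [inv_div, abs_of_nonneg (by positivity), smul_eq_mul]

open scoped ENNReal

lemma schur {X : Type*} [MeasurableSpace X] (μ : Measure X) [SFinite μ] (k : X → X → ℝ≥0∞)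
    (hk : Measurable (Function.uncurry k)) (w : X → ℝ≥0∞) (hw : Measurable w)
    (hw0 : ∀ᵐ x ∂μ, w x ≠ 0 ∧ w x ≠ ⊤) (A : ℝ≥0∞)
    (h1 : ∀ᵐ x ∂μ, ∫⁻ y, k x y * w y ∂μ ≤ A * w x)
    (h2 : ∀ᵐ y ∂μ, ∫⁻ x, k x y * w x ∂μ ≤ A * w y)
    (f : X → ℝ≥0∞) (hf : Measurable f) :
    ∫⁻ x, (∫⁻ y, k x y * f y ∂μ) ^ 2 ∂μ ≤ A ^ 2 * ∫⁻ y, f y ^ 2 ∂μ := by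
  have hkx : ∀ x, Measurable (k x) := fun x => hk.of_uncurry_left
  have hky : ∀ y, Measurable (fun x => k x y) := fun y => hk.of_uncurry_right
  have cs : ∀ x, (∫⁻ y, k x y * f y ∂μ) ^ 2 ≤
      (∫⁻ y, k x y * w y ∂μ) * ∫⁻ y, k x y * (f y ^ 2 / w y) ∂μ := by
    intro x
    have hkx := hkx x
    have h := ENNReal.lintegral_mul_le_Lp_mul_Lq μ (Real.HolderConjugate.two_two)
      (f := fun y => (k x y * w y) ^ (1/2:ℝ)) (g := fun y => (k x y * (f y ^ 2 / w y)) ^ (1/2:ℝ))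
      (by fun_prop) (by fun_prop)
    have e1 : ∀ z : ℝ≥0∞, (z ^ (1/2:ℝ)) ^ (2:ℝ) = z := by
      intro z; rw [← ENNReal.rpow_mul]; norm_num
    simp only [e1, Pi.mul_apply] at h
    have e2 : ∫⁻ y, (k x y * w y) ^ (1/2:ℝ) * (k x y * (f y ^ 2 / w y)) ^ (1/2:ℝ) ∂μ =
        ∫⁻ y, k x y * f y ∂μ := by
      apply lintegral_congr_ae
      filter_upwards [hw0] with y hy
      rw [← ENNReal.mul_rpow_of_nonneg _ _ (by norm_num)]
      have : k x y * w y * (k x y * (f y ^ 2 / w y)) = (k x y * f y) ^ (2:ℝ) := by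
        rw [ENNReal.rpow_two, mul_pow]
        calc _ = k x y ^ 2 * (w y * (f y ^ 2 / w y)) := by ring
          _ = _ := by rw [ENNReal.mul_div_cancel hy.1 hy.2]
      rw [this, ← ENNReal.rpow_mul]; norm_num
    rw [e2] at h
    calc _ ≤ ((∫⁻ y, k x y * w y ∂μ) ^ (1/2:ℝ) * (∫⁻ y, k x y * (f y ^ 2 / w y) ∂μ) ^ (1/2:ℝ)) ^ 2 := by
          gcongr
      _ = _ := by
          rw [← ENNReal.rpow_two, ENNReal.mul_rpow_of_nonneg _ _ (by norm_num), e1, e1]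
  calc _ ≤ ∫⁻ x, (A * w x) * ∫⁻ y, k x y * (f y ^ 2 / w y) ∂μ ∂μ := by
        apply lintegral_mono_ae
        filter_upwards [h1] with x hx
        refine (cs x).trans ?_
        gcongr
    _ = ∫⁻ x, ∫⁻ y, (A * w x) * (k x y * (f y ^ 2 / w y)) ∂μ ∂μ := by
        apply lintegral_congr
        intro x
        have := hkx x
        rw [lintegral_const_mul _ (by fun_prop)]
    _ = ∫⁻ y, ∫⁻ x, (A * w x) * (k x y * (f y ^ 2 / w y)) ∂μ ∂μ := by
        apply lintegral_lintegral_swap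
        apply Measurable.aemeasurable
        have : Measurable (fun p : X × X => k p.1 p.2) := hk
        show Measurable (fun p : X × X => (A * w p.1) * (k p.1 p.2 * (f p.2 ^ 2 / w p.2)))
        fun_prop
    _ = ∫⁻ y, (A * (f y ^ 2 / w y)) * ∫⁻ x, k x y * w x ∂μ ∂μ := by
        apply lintegral_congr
        intro y
        have := hky y
        rw [← lintegral_const_mul _ (by fun_prop)]
        apply lintegral_congr
        intro x; ring
    _ ≤ ∫⁻ y, A ^ 2 * f y ^ 2 ∂μ := by
        apply lintegral_mono_ae
        filter_upwards [h2, hw0] with y hy hy0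
        calc _ ≤ (A * (f y ^ 2 / w y)) * (A * w y) := by gcongr
          _ = A ^ 2 * (w y * (f y ^ 2 / w y)) := by ring
          _ = _ := by rw [ENNReal.mul_div_cancel hy0.1 hy0.2]
    _ = _ := by rw [lintegral_const_mul _ (by fun_prop)]

lemma exists_op {X : Type*} [MeasurableSpace X] (μ : Measure X) [SFinite μ] (K : X → X → ℂ)
    (hK : Measurable (Function.uncurry K)) (A : ℝ) (hA : 0 ≤ A)
    (hS : ∀ f : X → ℝ≥0∞, Measurable f →
      ∫⁻ x, (∫⁻ y, ‖K x y‖ₑ * f y ∂μ) ^ 2 ∂μ ≤ ENNReal.ofReal A ^ 2 * ∫⁻ y, f y ^ 2 ∂μ) :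
    ∃ T : Lp ℂ 2 μ →L[ℂ] Lp ℂ 2 μ, (∀ f : Lp ℂ 2 μ, ∀ᵐ t ∂μ,
      Integrable (fun y => K t y * f y) μ ∧ (T f : X → ℂ) t = ∫ y, K t y * f y ∂μ) ∧ ‖T‖ ≤ A := by
  have hKm : Measurable (fun p : X × X => K p.1 p.2) := hK
  have hKx : ∀ x, Measurable (K x) := fun x => hK.of_uncurry_left
  have hen : ∀ g : X → ℂ, eLpNorm g 2 μ = (∫⁻ y, ‖g y‖ₑ ^ 2 ∂μ) ^ (1/2:ℝ) := by
    intro g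
    rw [eLpNorm_eq_lintegral_rpow_enorm_toReal (by norm_num) (by norm_num)]
    simp
  have hfm : ∀ f : Lp ℂ 2 μ, Measurable (f : X → ℂ) := fun f => (Lp.stronglyMeasurable f).measurable
  have hfin : ∀ f : Lp ℂ 2 μ, ∫⁻ y, ‖(f : X → ℂ) y‖ₑ ^ 2 ∂μ < ⊤ := by
    intro f
    have h := Lp.eLpNorm_lt_top f
    rw [hen] at h
    by_contra hc
    rw [not_lt, top_le_iff] at hc
    rw [hc] at h
    simp at h
  have hSf : ∀ f : Lp ℂ 2 μ, ∫⁻ x, (∫⁻ y, ‖K x y‖ₑ * ‖(f : X → ℂ) y‖ₑ ∂μ) ^ 2 ∂μ ≤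
      ENNReal.ofReal A ^ 2 * ∫⁻ y, ‖(f : X → ℂ) y‖ₑ ^ 2 ∂μ := fun f => hS _ (hfm f).enorm
  have hint : ∀ f : Lp ℂ 2 μ, ∀ᵐ t ∂μ, Integrable (fun y => K t y * f y) μ := by
    intro f
    have hlt : ∫⁻ x, (∫⁻ y, ‖K x y‖ₑ * ‖(f : X → ℂ) y‖ₑ ∂μ) ^ 2 ∂μ < ⊤ :=
      (hSf f).trans_lt (ENNReal.mul_lt_top (by simp) (hfin f))
    have hfm := hfm f
    have hmeas : Measurable (fun x => (∫⁻ y, ‖K x y‖ₑ * ‖(f : X → ℂ) y‖ₑ ∂μ) ^ 2) := by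
      apply Measurable.pow_const
      apply Measurable.lintegral_prod_right'
        (f := fun p : X × X => ‖K p.1 p.2‖ₑ * ‖(f : X → ℂ) p.2‖ₑ)
      fun_prop
    filter_upwards [ae_lt_top hmeas hlt.ne] with x hx
    have := hKx x
    refine ⟨(by fun_prop : Measurable _).aestronglyMeasurable, ?_⟩
    rw [hasFiniteIntegral_iff_enorm]
    simp only [enorm_mul]
    by_contra hc
    rw [not_lt, top_le_iff] at hc
    rw [hc] at hx
    simp at hx
  have hnorm : ∀ f : Lp ℂ 2 μ, eLpNorm (fun t => ∫ y, K t y * f y ∂μ) 2 μ ≤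
      ENNReal.ofReal A * eLpNorm f 2 μ := by
    intro f
    rw [hen, hen]
    have : ENNReal.ofReal A = (ENNReal.ofReal A ^ 2) ^ (1/2:ℝ) := by
      rw [← ENNReal.rpow_two, ← ENNReal.rpow_mul]; norm_num
    rw [this, ← ENNReal.mul_rpow_of_nonneg _ _ (by norm_num)]
    gcongr
    refine le_trans ?_ (hSf f)
    gcongr with x
    refine (enorm_integral_le_lintegral_enorm _).trans ?_
    simp only [enorm_mul]
    exact le_rfl
  have hmem : ∀ f : Lp ℂ 2 μ, MemLp (fun t => ∫ y, K t y * f y ∂μ) 2 μ := by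
    intro f
    refine ⟨?_, (hnorm f).trans_lt (ENNReal.mul_lt_top (by simp) (Lp.eLpNorm_lt_top f))⟩
    have hfm := hfm f
    apply StronglyMeasurable.aestronglyMeasurable
    apply StronglyMeasurable.integral_prod_right (f := fun x y => K x y * (f : X → ℂ) y)
    exact Measurable.stronglyMeasurable
      (by fun_prop : Measurable (fun p : X × X => K p.1 p.2 * (f : X → ℂ) p.2))
  let T0 : Lp ℂ 2 μ →ₗ[ℂ] Lp ℂ 2 μ :=
    { toFun := fun f => (hmem f).toLp _
      map_add' := by
        intro f g
        rw [← MemLp.toLp_add]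
        apply (MemLp.toLp_eq_toLp_iff _ _).2
        filter_upwards [hint f, hint g] with t h1 h2
        simp only [Pi.add_apply]
        rw [← integral_add h1 h2]
        apply integral_congr_ae
        filter_upwards [Lp.coeFn_add f g] with y hy
        rw [hy, Pi.add_apply, mul_add]
      map_smul' := by
        intro c f
        simp only [RingHom.id_apply]
        rw [← MemLp.toLp_const_smul]
        apply (MemLp.toLp_eq_toLp_iff _ _).2
        refine Filter.Eventually.of_forall (fun t => ?_)
        simp only [Pi.smul_apply]
        rw [← integral_smul]
        apply integral_congr_ae
        filter_upwards [Lp.coeFn_smul c f] with y hy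
        rw [hy, Pi.smul_apply, smul_eq_mul, smul_eq_mul]; ring }
  have hb : ∀ f, ‖T0 f‖ ≤ A * ‖f‖ := by
    intro f
    change ‖(hmem f).toLp _‖ ≤ _
    rw [Lp.norm_toLp, Lp.norm_def]
    rw [← ENNReal.toReal_ofReal hA, ← ENNReal.toReal_mul]
    apply ENNReal.toReal_mono (ENNReal.mul_lt_top (by simp) (Lp.eLpNorm_lt_top f)).ne
    exact hnorm f
  refine ⟨T0.mkContinuous A hb, ?_, T0.mkContinuous_norm_le hA hb⟩
  intro f
  filter_upwards [hint f, (hmem f).coeFn_toLp] with t h1 h2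
  exact ⟨h1, h2⟩

lemma modal_measurable (α : ℝ) (n : ℤ) : Measurable (Function.uncurry (modalKernel α n)) := by
  have h0 : Measurable (fun q : (ℝ × ℝ) × ℝ => coneKernel α q.1.1 q.2 q.1.2 0) := by
    simp_rw [coneKernel_eq]
    unfold cR
    fun_prop
  have h1 : Measurable (fun q : (ℝ × ℝ) × ℝ =>
      Complex.exp (-Complex.I * (n : ℂ) * (q.2 : ℂ)) * (coneKernel α q.1.1 q.2 q.1.2 0 : ℂ)) := by
    fun_prop
  have h2 := (StronglyMeasurable.integral_prod_right
    (f := fun (p : ℝ × ℝ) (θ : ℝ) =>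
      Complex.exp (-Complex.I * (n : ℂ) * (θ : ℂ)) * (coneKernel α p.1 θ p.2 0 : ℂ))
    (ν := volume.restrict (Set.Ioc 0 (2 * π))) h1.stronglyMeasurable).measurable
  have e : Function.uncurry (modalKernel α n) = fun p : ℝ × ℝ => ((1 / (2 * π) : ℝ) : ℂ) *
      ∫ θ in Set.Ioc 0 (2 * π), Complex.exp (-Complex.I * (n : ℂ) * (θ : ℂ)) *
        (coneKernel α p.1 θ p.2 0 : ℂ) := by
    funext p
    simp only [Function.uncurry, modalKernel]
    rw [intervalIntegral.integral_of_le (by positivity)]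
  rw [e]
  exact h2.const_mul _

lemma muT_lint (F : ℝ → ℝ≥0∞) (hF : Measurable F) :
    ∫⁻ t, F t * (ENNReal.ofReal t)⁻¹ ∂muT = ∫⁻ t in Set.Ioi (0:ℝ), F t := by
  unfold muT
  rw [lintegral_withDensity_eq_lintegral_mul _ (by fun_prop) (by fun_prop)]
  apply setLIntegral_congr_fun measurableSet_Ioi
  intro t ht
  have h0 : ENNReal.ofReal t ≠ 0 := by simpa using ht
  simp only [Pi.mul_apply]
  rw [mul_comm, mul_assoc, ENNReal.inv_mul_cancel h0 ENNReal.ofReal_ne_top, mul_one]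

lemma muT_pos : ∀ᵐ t ∂muT, 0 < t := by
  have h : muT ≪ volume.restrict (Set.Ioi (0:ℝ)) := withDensity_absolutelyContinuous _ _
  exact h.ae_le (ae_restrict_mem measurableSet_Ioi)

lemma ker_lint (G : ℝ → ℝ) (k : ℝ → ℝ≥0∞) (τ C N s : ℝ) (hτ : 0 < τ) (hC : 0 ≤ C)
    (hN : 0 < N) (hs : 0 ≤ s)
    (hGi : ∫⁻ x, ENNReal.ofReal (G x) = ENNReal.ofReal (τ / N * ∫ u, gg u))
    (hk : ∀ x, 0 < x → x ≠ τ → k x ≤ ENNReal.ofReal (s * (C / τ ^ 2 * G x))) :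
    ∫⁻ x in Set.Ioi (0:ℝ), k x ≤ ENNReal.ofReal (s * C * (∫ u, gg u) / N) * (ENNReal.ofReal τ)⁻¹ := by
  have hI : 0 ≤ ∫ u, gg u := integral_nonneg gg_nonneg
  calc ∫⁻ x in Set.Ioi (0:ℝ), k x ≤ ∫⁻ x in Set.Ioi (0:ℝ), ENNReal.ofReal (s * (C / τ ^ 2 * G x)) := by
        apply lintegral_mono_ae
        have h1 : ∀ᵐ x ∂(volume.restrict (Set.Ioi (0:ℝ))), x ≠ τ :=
          ae_restrict_of_ae (by simp [ae_iff])
        filter_upwards [ae_restrict_mem measurableSet_Ioi, h1] with x hx hx1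
        exact hk x hx hx1
    _ ≤ ∫⁻ x, ENNReal.ofReal (s * (C / τ ^ 2 * G x)) := setLIntegral_le_lintegral _ _
    _ = ENNReal.ofReal (s * (C / τ ^ 2)) * ∫⁻ x, ENNReal.ofReal (G x) := by
        rw [← lintegral_const_mul' _ _ ENNReal.ofReal_ne_top]
        apply lintegral_congr
        intro x
        rw [← ENNReal.ofReal_mul (by positivity), mul_assoc]
    _ = _ := by
        rw [hGi, ← ENNReal.ofReal_mul (by positivity), ← ENNReal.ofReal_inv_of_pos hτ,
          ← ENNReal.ofReal_mul (by positivity)]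
        congr 1
        field_simp

instance : SFinite muT := by unfold muT; infer_instance

lemma muT_integrable (g : ℝ → ℂ) :
    (Integrable (fun t => g t) muT ↔ IntegrableOn (fun t => g t * (t : ℂ)) (Set.Ioi 0)) := by
  unfold muT
  rw [integrable_withDensity_iff_integrable_smul' (by fun_prop) (by simp)]
  apply integrable_congr
  filter_upwards [ae_restrict_mem measurableSet_Ioi] with t ht
  have ht : 0 < t := ht
  rw [ENNReal.toReal_ofReal ht.le, Complex.real_smul, mul_comm]

lemma muT_integral (g : ℝ → ℂ) :
    ∫ t, g t ∂muT = ∫ t in Set.Ioi (0:ℝ), g t * (t : ℂ) := by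
  unfold muT
  rw [integral_withDensity_eq_integral_toReal_smul (by fun_prop) (by simp)]
  apply integral_congr_ae
  filter_upwards [ae_restrict_mem measurableSet_Ioi] with t ht
  have ht : 0 < t := ht
  rw [ENNReal.toReal_ofReal ht.le, Complex.real_smul, mul_comm]

lemma modal_op (α : ℝ) (ha : 0 < sin α) : ∃ C : ℝ, 0 < C ∧ ∀ n : ℤ,
      ∃ T : Lp ℂ 2 muT →L[ℂ] Lp ℂ 2 muT,
        (∀ f : Lp ℂ 2 muT, ∀ᵐ t ∂muT,
          IntegrableOn (fun t' => modalKernel α n t t' * f t' * ((sin α * t' : ℝ) : ℂ))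
            (Set.Ioi 0) ∧
          (T f : ℝ → ℂ) t =
            ∫ t' in Set.Ioi (0:ℝ), modalKernel α n t t' * f t' * ((sin α * t' : ℝ) : ℂ)) ∧
        ‖T‖ ≤ C / ((n.natAbs : ℝ) + 1) := by
  obtain ⟨C, hC, hb⟩ := modal_bound α ha
  have hI : 0 ≤ ∫ u, gg u := integral_nonneg gg_nonneg
  refine ⟨2 * (sin α * C * (∫ u, gg u)) + 1, by positivity, ?_⟩
  intro n
  set N := max |(n:ℝ)| 1 with hN
  have hN1 : 1 ≤ N := by rw [hN]; exact le_max_right _ _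
  have hN0 : 0 < N := by linarith
  have hKm := modal_measurable α n
  have hKm' : Measurable (fun p : ℝ × ℝ => modalKernel α n p.1 p.2) := hKm
  have hKs : Measurable (Function.uncurry (fun t t' => modalKernel α n t t' * (sin α : ℂ))) := by
    show Measurable (fun p : ℝ × ℝ => modalKernel α n p.1 p.2 * (sin α : ℂ))
    fun_prop
  have hke : ∀ t t', ‖modalKernel α n t t' * (sin α : ℂ)‖ₑ =
      ENNReal.ofReal (sin α * ‖modalKernel α n t t'‖) := by
    intro t t'
    rw [← ofReal_norm, norm_mul, mul_comm, Complex.norm_real, Real.norm_eq_abs, abs_of_pos ha]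
  obtain ⟨T, hT1, hT2⟩ := exists_op muT (fun t t' => modalKernel α n t t' * (sin α : ℂ)) hKs
    (sin α * C * (∫ u, gg u) / N) (by positivity) (by
      intro f hf
      refine schur muT (fun t t' => ‖modalKernel α n t t' * (sin α : ℂ)‖ₑ) ?_
        (fun t => (ENNReal.ofReal t)⁻¹) (by fun_prop) ?_ _ ?_ ?_ f hf
      · exact hKs.enorm
      · filter_upwards [muT_pos] with t ht
        simp [ht]
      · filter_upwards [muT_pos] with t ht
        have hm : Measurable (fun y => ‖modalKernel α n t y * (sin α : ℂ)‖ₑ) :=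
          (hKs.of_uncurry_left (x := t)).enorm
        rw [muT_lint _ hm]
        refine ker_lint (fun y => gg (N / t * (t - y))) _ t C N
          (sin α) ht hC.le hN0 ha.le ?_ ?_
        · rw [lintegral_sub_left_eq_self (fun x => ENNReal.ofReal (gg (N / t * x))) t]
          exact gg_lint N t hN0 ht
        · intro y hy hyt
          rw [hke]
          apply ENNReal.ofReal_le_ofReal
          gcongr
          exact hb n t y t ht hy (Ne.symm hyt) (Or.inl rfl)
      · filter_upwards [muT_pos] with t ht
        have hm : Measurable (fun y => ‖modalKernel α n y t * (sin α : ℂ)‖ₑ) :=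
          (hKs.of_uncurry_right (y := t)).enorm
        rw [muT_lint _ hm]
        refine ker_lint (fun y => gg (N / t * (y - t))) _ t C N
          (sin α) ht hC.le hN0 ha.le ?_ ?_
        · rw [lintegral_sub_right_eq_self (fun x => ENNReal.ofReal (gg (N / t * x))) t]
          exact gg_lint N t hN0 ht
        · intro y hy hyt
          rw [hke]
          apply ENNReal.ofReal_le_ofReal
          gcongr
          exact hb n y t t hy ht hyt (Or.inr rfl))
  refine ⟨T, ?_, ?_⟩
  · intro f
    filter_upwards [hT1 f] with t ht
    have e : (fun t' => modalKernel α n t t' * f t' * ((sin α * t' : ℝ) : ℂ)) =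
        fun t' => modalKernel α n t t' * (sin α : ℂ) * f t' * (t' : ℂ) := by
      funext t'; push_cast; ring
    rw [e]
    exact ⟨(muT_integrable _).1 ht.1, ht.2.trans (muT_integral _)⟩
  · refine hT2.trans ?_
    have e : (n.natAbs : ℝ) = |(n:ℝ)| := by
      rw [Nat.cast_natAbs, Int.cast_abs]
    rw [e, div_le_div_iff₀ hN0 (by positivity)]
    have h1 : |(n:ℝ)| ≤ N := le_max_left _ _
    have h2 : 0 ≤ sin α * C * (∫ u, gg u) := by positivity
    nlinarith

theorem modal_operator_bound (α : ℝ) (hα0 : 0 < α) (hαπ : α < π) (hα2 : α ≠ π / 2) :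
    ∃ C : ℝ, 0 < C ∧ ∀ n : ℤ,
      ∃ T : Lp ℂ 2 muT →L[ℂ] Lp ℂ 2 muT,
        (∀ f : Lp ℂ 2 muT, ∀ᵐ t ∂muT,
          IntegrableOn (fun t' => modalKernel α n t t' * f t' * ((sin α * t' : ℝ) : ℂ))
            (Set.Ioi 0) ∧
          (T f : ℝ → ℂ) t =
            ∫ t' in Set.Ioi (0:ℝ), modalKernel α n t t' * f t' * ((sin α * t' : ℝ) : ℂ)) ∧
        ‖T‖ ≤ C / ((n.natAbs : ℝ) + 1) ∧
        ∀ T' : Lp ℂ 2 muT →L[ℂ] Lp ℂ 2 muT,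
          (∀ f : Lp ℂ 2 muT, ∀ᵐ t ∂muT,
            IntegrableOn (fun t' => modalKernel α n t t' * f t' * ((sin α * t' : ℝ) : ℂ))
              (Set.Ioi 0) ∧
            (T' f : ℝ → ℂ) t =
              ∫ t' in Set.Ioi (0:ℝ), modalKernel α n t t' * f t' * ((sin α * t' : ℝ) : ℂ)) →
          T' = T := by
  obtain ⟨C, hC, h⟩ := modal_op α (sin_pos_of_pos_of_lt_pi hα0 hαπ)
  refine ⟨C, hC, fun n => ?_⟩
  obtain ⟨T, h1, h2⟩ := h n
  refine ⟨T, h1, h2, fun T' h3 => ?_⟩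
  ext1 f
  apply Lp.ext
  filter_upwards [h1 f, h3 f] with t ha hb
  rw [ha.2, hb.2]
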